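/- arXiv:1101.2946 — 2 statements merged into one kernel-verified Lean document; each statement's English description precedes it below -/
import Mathlib

section
/- (Landau–Pollak uncertainty relation for several projections.) Let I be a finite index set, let (A_i)_{i∈I} be a family of orthogonal projection matrices on ℂ^d (A_i² = A_i = A_i^*), and let ρ be a density matrix on ℂ^d (positive semidefinite with trace 1). Then Σ_{i∈I} tr(ρ A_i) ≤ 1 + ( Σ_{i≠j} ‖A_i A_j‖² )^{1/2}, where ‖·‖ is the L2 operator norm. -/
/-!
Write `C = (∑_{i≠j} ‖A_i A_j‖²)^{1/2}`. For a single vector `v` put `S = ∑ ‖A_i v‖²`. Since the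
`A_i` are projections, `S = ⟪v, ∑ A_i v⟫ ≤ ‖v‖ ‖∑ A_i v‖`. Expanding,
`‖∑ A_i v‖² = S + ∑_{i≠j} re ⟪A_i v, A_j v⟫`, where
`⟪A_i v, A_j v⟫ = ⟪A_i v, A_i A_j (A_j v)⟫ ≤ ‖A_i A_j‖ ‖A_i v‖ ‖A_j v‖`, so Cauchy–Schwarz over the
pairs bounds the off-diagonal part by `C S`. Hence `S² ≤ ‖v‖² (1 + C) S`, that is
`S ≤ (1 + C) ‖v‖²` (`sum_norm_sq_le`). Factoring `ρ = Bᴴ B`, the trace `tr(ρ A_i)` is the sum of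
`‖A_i v_k‖²` over the columns `v_k` of `Bᴴ` (`trace_re_eq`), and `∑ ‖v_k‖² = tr ρ = 1`.
-/

open Matrix
open scoped ComplexOrder

noncomputable section

/-- The Landau–Pollak inequality for a single (not necessarily normalized) vector. -/
lemma sum_norm_sq_le {E I : Type*} [NormedAddCommGroup E] [InnerProductSpace ℂ E]
    [Fintype I] [DecidableEq I] (T : I → E →L[ℂ] E)
    (hidem : ∀ i v, T i (T i v) = T i v)
    (hsymm : ∀ i x y, inner ℂ (T i x) y = inner ℂ x (T i y)) (v : E) :
    ∑ i, ‖T i v‖ ^ 2 ≤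
      (1 + √(∑ i, ∑ j, if i ≠ j then ‖T i * T j‖ ^ 2 else 0)) * ‖v‖ ^ 2 := by
  set S : ℝ := ∑ i, ‖T i v‖ ^ 2 with hS
  set c : I → I → ℝ := fun i j => if i ≠ j then ‖T i * T j‖ else 0 with hc
  have hcsq : (∑ i, ∑ j, if i ≠ j then ‖T i * T j‖ ^ 2 else 0) = ∑ p : I × I, c p.1 p.2 ^ 2 := by
    rw [Fintype.sum_prod_type]
    refine Finset.sum_congr rfl fun i _ => Finset.sum_congr rfl fun j _ => ?_
    by_cases h : i = j <;> simp [hc, h]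
  rw [hcsq]
  set C : ℝ := √(∑ p : I × I, c p.1 p.2 ^ 2) with hC
  have hS0 : 0 ≤ S := Finset.sum_nonneg fun i _ => by positivity
  have hC0 : 0 ≤ C := Real.sqrt_nonneg _
  have hdiag : ∀ i, (inner ℂ v (T i v)).re = ‖T i v‖ ^ 2 := fun i => by
    rw [← hidem i v, ← hsymm, hidem]
    exact inner_self_eq_norm_sq (𝕜 := ℂ) _
  have hSinner : S ≤ ‖v‖ * ‖∑ i, T i v‖ := by
    have : S = (inner ℂ v (∑ i, T i v)).re := by
      rw [inner_sum, Complex.re_sum]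
      exact Finset.sum_congr rfl fun i _ => (hdiag i).symm
    rw [this]
    exact re_inner_le_norm (𝕜 := ℂ) _ _
  have hpair : ∀ i j, (inner ℂ (T i v) (T j v)).re ≤
      (if i = j then ‖T i v‖ ^ 2 else 0) + c i j * (‖T i v‖ * ‖T j v‖) := fun i j => by
    by_cases h : i = j
    · subst h
      simpa [hc] using (inner_self_eq_norm_sq (𝕜 := ℂ) (T i v)).le
    · have h1 : inner ℂ (T i v) (T j v) = inner ℂ (T i v) ((T i * T j) (T j v)) := by
        rw [mul_apply_eq_comp, hidem, ← hsymm i (T i v), hidem]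
      rw [h1]
      calc (inner ℂ (T i v) ((T i * T j) (T j v))).re
          ≤ ‖T i v‖ * ‖(T i * T j) (T j v)‖ := re_inner_le_norm (𝕜 := ℂ) _ _
        _ ≤ ‖T i v‖ * (‖T i * T j‖ * ‖T j v‖) := by
            gcongr; exact ContinuousLinearMap.le_opNorm _ _
        _ = _ := by simp [hc, h]; ring
  have hcross : ∑ i, ∑ j, c i j * (‖T i v‖ * ‖T j v‖) ≤ C * S := by
    have hprod : ∑ p : I × I, (‖T p.1 v‖ * ‖T p.2 v‖) ^ 2 = S ^ 2 := by
      rw [Fintype.sum_prod_type, sq S, hS, Finset.sum_mul_sum]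
      simp only [mul_pow]
    have := Real.sum_mul_le_sqrt_mul_sqrt Finset.univ (fun p : I × I => c p.1 p.2)
      (fun p => ‖T p.1 v‖ * ‖T p.2 v‖)
    rwa [hprod, Real.sqrt_sq hS0, Fintype.sum_prod_type] at this
  have hnorm : ‖∑ i, T i v‖ ^ 2 ≤ (1 + C) * S := by
    have h1 : ‖∑ i, T i v‖ ^ 2 = ∑ i, ∑ j, (inner ℂ (T i v) (T j v)).re := by
      rw [← inner_self_eq_norm_sq (𝕜 := ℂ), sum_inner]
      simp [inner_sum]
    rw [h1]
    calc _ ≤ ∑ i, ∑ j, ((if i = j then ‖T i v‖ ^ 2 else 0) + c i j * (‖T i v‖ * ‖T j v‖)) :=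
          Finset.sum_le_sum fun i _ => Finset.sum_le_sum fun j _ => hpair i j
      _ = S + ∑ i, ∑ j, c i j * (‖T i v‖ * ‖T j v‖) := by
          simp [Finset.sum_add_distrib, hS]
      _ ≤ (1 + C) * S := by linarith
  have hsq : S * S ≤ ((1 + C) * ‖v‖ ^ 2) * S := by
    calc S * S ≤ (‖v‖ * ‖∑ i, T i v‖) * (‖v‖ * ‖∑ i, T i v‖) :=
          mul_self_le_mul_self hS0 hSinner
      _ = ‖v‖ ^ 2 * ‖∑ i, T i v‖ ^ 2 := by ring
      _ ≤ ‖v‖ ^ 2 * ((1 + C) * S) := by gcongr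
      _ = _ := by ring
  rcases hS0.eq_or_lt with h0 | h0
  · rw [← h0]; positivity
  · exact le_of_mul_le_mul_right hsq h0

open scoped MatrixOrder in
lemma exists_eq_conjTranspose_mul_self {d : ℕ} {ρ : Matrix (Fin d) (Fin d) ℂ}
    (h : ρ.PosSemidef) : ∃ B : Matrix (Fin d) (Fin d) ℂ, ρ = Bᴴ * B :=
  CStarAlgebra.nonneg_iff_eq_star_mul_self.mp h.nonneg

/-- For a projection `P`, `tr(Bᴴ B P)` is the sum of `‖P v‖²` over the columns `v` of `Bᴴ`. -/
lemma trace_re_eq {d : ℕ} (B P : Matrix (Fin d) (Fin d) ℂ) (h1 : P * P = P) (h2 : Pᴴ = P) :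
    (Matrix.trace (Bᴴ * B * P)).re =
      ∑ k, ‖Matrix.toEuclideanCLM (𝕜 := ℂ) P (WithLp.toLp 2 (Bᴴ.col k))‖ ^ 2 := by
  have h : Matrix.trace (Bᴴ * B * P) = Matrix.trace ((P * Bᴴ)ᴴ * (P * Bᴴ)) := by
    rw [conjTranspose_mul, conjTranspose_conjTranspose, h2, Matrix.mul_assoc, Matrix.trace_mul_comm,
      Matrix.mul_assoc B P Bᴴ, Matrix.mul_assoc B P (P * Bᴴ), ← Matrix.mul_assoc P P, h1]
  rw [h, Matrix.trace, Complex.re_sum]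
  refine Finset.sum_congr rfl fun k _ => ?_
  rw [EuclideanSpace.norm_sq_eq, Matrix.diag_apply, Matrix.mul_apply, Complex.re_sum]
  refine Finset.sum_congr rfl fun j _ => ?_
  have : (Matrix.toEuclideanCLM (𝕜 := ℂ) P (WithLp.toLp 2 (Bᴴ.col k))) j = (P * Bᴴ) j k := by
    rw [toEuclideanCLM_toLp]; rfl
  rw [this, conjTranspose_apply, Complex.sq_norm, Complex.normSq_apply]
  simp [Complex.mul_re]

/-- Landau–Pollak uncertainty relation for an arbitrary finite family of
orthogonal projections: for every density matrix `ρ`,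
`Σ_i tr(ρ A_i) ≤ 1 + (Σ_{i≠j} ‖A_i A_j‖²)^{1/2}` (L2 operator norm). -/
theorem landau_pollak {d : ℕ} {I : Type*} [Fintype I] [DecidableEq I]
    (A : I → Matrix (Fin d) (Fin d) ℂ)
    (hproj : ∀ i, A i * A i = A i ∧ (A i)ᴴ = A i)
    (ρ : Matrix (Fin d) (Fin d) ℂ) (hpsd : ρ.PosSemidef) (htr : ρ.trace = 1) :
    ∑ i, (Matrix.trace (ρ * A i)).re ≤
      1 + Real.sqrt (∑ i, ∑ j,
        if i ≠ j then ‖Matrix.toEuclideanCLM (𝕜 := ℂ) (A i * A j)‖ ^ 2 else 0) := by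
  obtain ⟨B, rfl⟩ : ∃ B : Matrix (Fin d) (Fin d) ℂ, ρ = Bᴴ * B :=
    exists_eq_conjTranspose_mul_self hpsd
  have hone : ∑ k, ‖(WithLp.toLp 2 (Bᴴ.col k) : EuclideanSpace ℂ (Fin d))‖ ^ 2 = 1 := by
    have := trace_re_eq B 1 (by simp) (by simp)
    rw [mul_one, htr] at this
    simpa using this.symm
  have hidem : ∀ i v, toEuclideanCLM (𝕜 := ℂ) (A i) (toEuclideanCLM (𝕜 := ℂ) (A i) v) =
      toEuclideanCLM (𝕜 := ℂ) (A i) v := fun i v => by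
    rw [← mul_apply_eq_comp, ← map_mul, (hproj i).1]
  have hsymm : ∀ i x y, inner ℂ (toEuclideanCLM (𝕜 := ℂ) (A i) x) y =
      inner ℂ x (toEuclideanCLM (𝕜 := ℂ) (A i) y) := fun i x y => by
    have h : ContinuousLinearMap.adjoint (toEuclideanCLM (𝕜 := ℂ) (A i)) =
        toEuclideanCLM (𝕜 := ℂ) (A i) := by
      rw [← ContinuousLinearMap.star_eq_adjoint, ← map_star, star_eq_conjTranspose, (hproj i).2]
    rw [← ContinuousLinearMap.adjoint_inner_left, h]
  simp only [map_mul]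
  rw [Finset.sum_congr rfl fun i _ => trace_re_eq B (A i) (hproj i).1 (hproj i).2,
    Finset.sum_comm]
  refine (Finset.sum_le_sum fun k _ => sum_norm_sq_le
    (fun i => toEuclideanCLM (𝕜 := ℂ) (A i)) hidem hsymm _).trans ?_
  rw [← Finset.mul_sum, hone, mul_one]
end
end

section
/- Let N ≥ 1 and let b, e be finite-dimensional complex Hilbert spaces (ℂ^b and ℂ^e). Let C, D ⊆ {0,1}^N, let (E_z)_{z∈C} be orthogonal projections on ℂ^b with E_z E_{z'} = 0 for z ≠ z', and let (F_x)_{x∈D} be orthogonal projections on ℂ^e with F_x F_{x'} = 0 for x ≠ x'. Define P = Σ_{z∈C} Z_z ⊗ E_z ⊗ I_e and Q = Σ_{x∈D} X_x ⊗ I_b ⊗ F_x, matrices on ℂ^({0,1}^N) ⊗ ℂ^b ⊗ ℂ^e (Kronecker products). Then the L2 operator norm satisfies ‖P Q‖ ≤ 2^(−N/2). -/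
/-!
Write `P` and `Q` for the two factors. The summands of `P` are pairwise orthogonal projections
because the `E z` are, so `P` is an orthogonal projection, and `Q` is self-adjoint. Hence
`(P Q)ᴴ (P Q) = Q P Q`. Expanding, the cross terms `x ≠ x'` vanish since `F x * F x' = 0`, and mutual
unbiasedness in the form `X_x Z_z X_x = 2^(-N) X_x` leaves
`Q P Q = 2^(-N) ∑_{x ∈ D, z ∈ C} X_x ⊗ E_z ⊗ F_x`.
The double sum is again an orthogonal projection, of norm at most `1`, and the C⋆-identity
gives `‖P Q‖² ≤ 2^(-N)`.
-/

open Matrix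
open scoped Kronecker

noncomputable section

/-- Standard basis vector `e_z` of `ℂ^({0,1}^N)`. -/
def ketVec (N : ℕ) (z : Fin N → Bool) : (Fin N → Bool) → ℂ := fun w =>
  if w = z then 1 else 0

/-- Hadamard basis vector `x̄(w) = 2^(−N/2)·(−1)^(x·w)`. -/
def hadVec (N : ℕ) (x : Fin N → Bool) : (Fin N → Bool) → ℂ := fun w =>
  ((-1 : ℂ) ^ (Finset.univ.filter fun i => x i && w i).card) / ((Real.sqrt 2 ^ N : ℝ) : ℂ)

/-- Outer product `v v^*`. -/
def outer {ι : Type*} (v : ι → ℂ) : Matrix ι ι ℂ :=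
  Matrix.vecMulVec v (fun j => (starRingEnd ℂ) (v j))

/-- `Z_z = e_z e_z^*`. -/
def Zproj (N : ℕ) (z : Fin N → Bool) : Matrix (Fin N → Bool) (Fin N → Bool) ℂ :=
  outer (ketVec N z)

/-- `X_x = x̄ x̄^*`. -/
def Xproj (N : ℕ) (x : Fin N → Bool) : Matrix (Fin N → Bool) (Fin N → Bool) ℂ :=
  outer (hadVec N x)

theorem isStarProjection_sum {ι R : Type*} [NonUnitalSemiring R] [StarRing R] (s : Finset ι)
    (G : ι → R) (hG : ∀ i ∈ s, IsStarProjection (G i))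
    (horth : ∀ i ∈ s, ∀ j ∈ s, i ≠ j → G i * G j = 0) :
    IsStarProjection (∑ i ∈ s, G i) := by
  refine ⟨?_, ?_⟩
  · change (∑ i ∈ s, G i) * (∑ i ∈ s, G i) = _
    rw [Finset.sum_mul_sum]
    refine Finset.sum_congr rfl fun i hi => ?_
    rw [Finset.sum_eq_single_of_mem i hi fun j hj hji => horth i hi j hj hji.symm]
    exact (hG i hi).isIdempotentElem
  · change star (∑ i ∈ s, G i) = _
    rw [star_sum]
    exact Finset.sum_congr rfl fun i hi => (hG i hi).isSelfAdjoint

theorem isStarProjection_kronecker {m n : Type*} [Fintype m] [Fintype n]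
    {A : Matrix m m ℂ} {B : Matrix n n ℂ} (hA : IsStarProjection A) (hB : IsStarProjection B) :
    IsStarProjection (A ⊗ₖ B) := by
  have hA1 : A * A = A := hA.isIdempotentElem
  have hB1 : B * B = B := hB.isIdempotentElem
  have hA2 : Aᴴ = A := hA.isSelfAdjoint
  have hB2 : Bᴴ = B := hB.isSelfAdjoint
  refine ⟨?_, ?_⟩
  · change A ⊗ₖ B * A ⊗ₖ B = A ⊗ₖ B
    rw [← mul_kronecker_mul, hA1, hB1]
  · change (A ⊗ₖ B)ᴴ = A ⊗ₖ B
    rw [conjTranspose_kronecker, hA2, hB2]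

/-- The C⋆-identity: `a⋆ a = r² p` with `p` a projection forces `‖a‖ ≤ r`. -/
theorem norm_le_of_star_mul_self_eq_smul {A : Type*} [NonUnitalNormedRing A] [StarRing A]
    [CStarRing A] [NormedSpace ℂ A] {a p : A} {r : ℝ} (hr : 0 ≤ r) (hp : IsStarProjection p)
    (h : star a * a = ((r ^ 2 : ℝ) : ℂ) • p) : ‖a‖ ≤ r := by
  have h1 : ‖p‖ ≤ 1 := hp.norm_le
  have h3 := CStarRing.norm_star_mul_self (x := a)
  rw [h, norm_smul, Complex.norm_real, Real.norm_of_nonneg (sq_nonneg r)] at h3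
  refine le_of_sq_le_sq ?_ hr
  nlinarith [sq_nonneg r]

theorem outer_mul_outer {ι : Type*} [Fintype ι] (v : ι → ℂ) (h : ∑ i, v i * star (v i) = 1) :
    outer v * outer v = outer v := by
  ext i j
  simp only [outer, mul_apply, vecMulVec_apply]
  calc ∑ k, v i * star (v k) * (v k * star (v j))
      = v i * star (v j) * ∑ k, v k * star (v k) := by
        rw [Finset.mul_sum]; exact Finset.sum_congr rfl fun k _ => by ring
    _ = _ := by rw [h, mul_one]; rfl

theorem isStarProjection_outer {ι : Type*} [Fintype ι] (v : ι → ℂ)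
    (h : ∑ i, v i * star (v i) = 1) : IsStarProjection (outer v) := by
  refine ⟨outer_mul_outer v h, ?_⟩
  change (outer v)ᴴ = outer v
  ext i j
  simp [outer, vecMulVec_apply, mul_comm]

/-- Every coordinate of a Hadamard basis vector has squared modulus `2^(-N)`. -/
theorem hadVec_mul_star (N : ℕ) (x w : Fin N → Bool) :
    hadVec N x w * star (hadVec N x w) = ((((Real.sqrt 2 ^ N)⁻¹) ^ 2 : ℝ) : ℂ) := by
  have h (k : ℕ) : ((-1 : ℂ) ^ k) * (-1) ^ k = 1 := by
    rw [← mul_pow]; simp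
  simp only [hadVec, star_div₀, star_pow, star_neg, star_one, RCLike.star_def, Complex.conj_ofReal]
  rw [div_mul_div_comm, h]
  push_cast
  rw [one_div, inv_pow, sq]

theorem isStarProjection_Zproj (N : ℕ) (z : Fin N → Bool) : IsStarProjection (Zproj N z) :=
  isStarProjection_outer _ (by simp [ketVec])

theorem isStarProjection_Xproj (N : ℕ) (x : Fin N → Bool) : IsStarProjection (Xproj N x) := by
  refine isStarProjection_outer _ ?_
  simp only [hadVec_mul_star]
  have h : (Real.sqrt 2 ^ N) ^ 2 = 2 ^ N := by
    rw [← pow_mul, mul_comm, pow_mul, Real.sq_sqrt (by norm_num)]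
  rw [inv_pow, h]
  simp

/-- Mutual unbiasedness of the standard and the Hadamard basis. -/
theorem Xproj_mul_Zproj_mul_Xproj (N : ℕ) (x z : Fin N → Bool) :
    Xproj N x * Zproj N z * Xproj N x =
      ((((Real.sqrt 2 ^ N)⁻¹) ^ 2 : ℝ) : ℂ) • Xproj N x := by
  ext i j
  rw [← hadVec_mul_star N x z]
  simp [Xproj, Zproj, outer, mul_apply, vecMulVec_apply, ketVec]
  ring

/-- For `P = Σ_{z∈C} Z_z ⊗ E_z ⊗ I_e` and `Q = Σ_{x∈D} X_x ⊗ I_b ⊗ F_x` built from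
mutually orthogonal projections, the L2 operator norm satisfies `‖P Q‖ ≤ 2^(−N/2)`. -/
theorem opNorm_PQ_le (N b e : ℕ) (hN : 1 ≤ N)
    (C D : Finset (Fin N → Bool))
    (E : (Fin N → Bool) → Matrix (Fin b) (Fin b) ℂ)
    (F : (Fin N → Bool) → Matrix (Fin e) (Fin e) ℂ)
    (hEproj : ∀ z ∈ C, E z * E z = E z ∧ (E z)ᴴ = E z)
    (hEorth : ∀ z ∈ C, ∀ z' ∈ C, z ≠ z' → E z * E z' = 0)
    (hFproj : ∀ x ∈ D, F x * F x = F x ∧ (F x)ᴴ = F x)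
    (hForth : ∀ x ∈ D, ∀ x' ∈ D, x ≠ x' → F x * F x' = 0) :
    ‖Matrix.toEuclideanCLM (𝕜 := ℂ)
        ((∑ z ∈ C, (Zproj N z ⊗ₖ E z) ⊗ₖ (1 : Matrix (Fin e) (Fin e) ℂ)) *
          (∑ x ∈ D, (Xproj N x ⊗ₖ (1 : Matrix (Fin b) (Fin b) ℂ)) ⊗ₖ F x))‖ ≤
      (Real.sqrt 2 ^ N)⁻¹ := by
  set r : ℝ := (Real.sqrt 2 ^ N)⁻¹ with hr
  set P := ∑ z ∈ C, (Zproj N z ⊗ₖ E z) ⊗ₖ (1 : Matrix (Fin e) (Fin e) ℂ) with hPdef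
  set Q := ∑ x ∈ D, (Xproj N x ⊗ₖ (1 : Matrix (Fin b) (Fin b) ℂ)) ⊗ₖ F x with hQdef
  have hE : ∀ z ∈ C, IsStarProjection (E z) := fun z hz => ⟨(hEproj z hz).1, (hEproj z hz).2⟩
  have hF : ∀ x ∈ D, IsStarProjection (F x) := fun x hx => ⟨(hFproj x hx).1, (hFproj x hx).2⟩
  have hP : IsStarProjection P := by
    refine isStarProjection_sum _ _ (fun z hz => isStarProjection_kronecker
      (isStarProjection_kronecker (isStarProjection_Zproj N z) (hE z hz)) (.one _)) ?_
    intro z hz z' hz' hne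
    rw [← mul_kronecker_mul, ← mul_kronecker_mul, hEorth z hz z' hz' hne]
    simp
  have hQ : IsStarProjection Q := by
    refine isStarProjection_sum _ _ (fun x hx => isStarProjection_kronecker
      (isStarProjection_kronecker (isStarProjection_Xproj N x) (.one _)) (hF x hx)) ?_
    intro x hx x' hx' hne
    rw [← mul_kronecker_mul, hForth x hx x' hx' hne]
    simp
  have hR : IsStarProjection (∑ x ∈ D, ∑ z ∈ C, (Xproj N x ⊗ₖ E z) ⊗ₖ F x) := by
    refine isStarProjection_sum _ _ (fun x hx => isStarProjection_sum _ _
      (fun z hz => isStarProjection_kronecker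
        (isStarProjection_kronecker (isStarProjection_Xproj N x) (hE z hz)) (hF x hx)) ?_) ?_
    · intro z hz z' hz' hne
      rw [← mul_kronecker_mul, ← mul_kronecker_mul, hEorth z hz z' hz' hne]
      simp
    · intro x hx x' hx' hne
      rw [Finset.sum_mul_sum]
      refine Finset.sum_eq_zero fun z _ => Finset.sum_eq_zero fun z' _ => ?_
      rw [← mul_kronecker_mul, hForth x hx x' hx' hne]
      simp
  have hQPQ : Q * P * Q = ((r ^ 2 : ℝ) : ℂ) •
      ∑ x ∈ D, ∑ z ∈ C, (Xproj N x ⊗ₖ E z) ⊗ₖ F x := by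
    rw [hQdef, hPdef, Finset.sum_mul_sum, Finset.sum_mul, Finset.smul_sum]
    refine Finset.sum_congr rfl fun x hx => ?_
    rw [Finset.sum_mul, Finset.smul_sum]
    refine Finset.sum_congr rfl fun z hz => ?_
    rw [Finset.mul_sum, Finset.sum_eq_single_of_mem x hx]
    · simp only [← mul_kronecker_mul, Xproj_mul_Zproj_mul_Xproj, (hFproj x hx).1, one_mul, mul_one,
        smul_kronecker, ← hr]
    · intro x' hx' hne
      simp only [← mul_kronecker_mul, mul_one, hForth x hx x' hx' hne.symm, kronecker_zero]
  have hstar : star (P * Q) * (P * Q) = Q * P * Q := by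
    rw [star_mul, hP.isSelfAdjoint.star_eq, hQ.isSelfAdjoint.star_eq, mul_assoc, ← mul_assoc P P Q,
      hP.isIdempotentElem.eq, mul_assoc]
  refine norm_le_of_star_mul_self_eq_smul (by positivity)
    (hR.map (Matrix.toEuclideanCLM (𝕜 := ℂ))) ?_
  rw [← map_star, ← map_mul, hstar, hQPQ, map_smul]
end
end
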